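/- The permutation σ₁ has order 2n, the permutation σ₂ has order 2m, the product σ₁σ₂ has order 2, and the subgroup G = ⟨σ₁, σ₂⟩ of the automorphism group of Γ has order 4m²n. -/

import Mathlib

/-- The lexicographic product `C_n[mK_1]`: vertices `(i,j)` with `(i₁,j₁) ~ (i₂,j₂)`
iff `i₂ = i₁ + 1` or `i₁ = i₂ + 1` (indices modulo `n`). -/
def lexCycle (n m : ℕ) : SimpleGraph (ZMod n × ZMod m) :=
  SimpleGraph.fromRel (fun u v => v.1 = u.1 + 1)

/-- The representative in `{1, …, n}` of `i` modulo `n`. -/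
def zrep {n : ℕ} (i : ZMod n) : ℕ := if i.val = 0 then n else i.val

lemma zrep_bounds {n : ℕ} (hn : 0 < n) (i : ZMod n) :
    1 ≤ zrep i ∧ zrep i ≤ n ∧ ((zrep i : ℕ) : ZMod n) = i := by
  have : NeZero n := ⟨hn.ne'⟩
  have h1 := ZMod.val_lt i
  unfold zrep
  split_ifs with h
  · refine ⟨hn, le_rfl, ?_⟩
    rw [ZMod.natCast_self]
    exact ((ZMod.val_eq_zero i).1 h).symm
  · exact ⟨by omega, h1.le, ZMod.natCast_zmod_val i⟩

lemma zrep_unique {n : ℕ} (hn : 0 < n) (r : ℕ) (h1 : 1 ≤ r) (h2 : r ≤ n) :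
    zrep ((r : ℕ) : ZMod n) = r := by
  unfold zrep
  rw [ZMod.val_natCast]
  rcases h2.lt_or_eq with h | h
  · rw [Nat.mod_eq_of_lt h]; split_ifs <;> omega
  · subst h; simp

lemma zrep_eq {n : ℕ} (hn : 0 < n) (i : ZMod n) (r : ℕ) (h1 : 1 ≤ r) (h2 : r ≤ n)
    (h : (r : ZMod n) = i) : zrep i = r := by
  rw [← h]; exact zrep_unique hn r h1 h2

lemma zrep_succ {n : ℕ} (hn : 0 < n) (i : ZMod n) (hi : i ≠ 0) : zrep (i + 1) = zrep i + 1 := by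
  obtain ⟨h1, h2, h3⟩ := zrep_bounds hn i
  have : zrep i ≠ n := by
    intro h; rw [h, ZMod.natCast_self] at h3; exact hi h3.symm
  apply zrep_eq hn _ _ (by omega) (by omega)
  push_cast; rw [h3]

lemma zrep_refl {n : ℕ} (hn : 0 < n) (i : ZMod n) (hi : i ≠ 1) :
    zrep (2 - i) = n + 2 - zrep i ∧ 2 ≤ zrep i := by
  obtain ⟨h1, h2, h3⟩ := zrep_bounds hn i
  have : zrep i ≠ 1 := by
    intro h; rw [h, Nat.cast_one] at h3; exact hi h3.symm
  refine ⟨?_, by omega⟩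
  apply zrep_eq hn _ _ (by omega) (by omega)
  rw [Nat.cast_sub (by omega)]; push_cast; rw [h3]; simp

/-- Translations. -/
def trT {n m : ℕ} (sg : ZMod n → ZMod m) (u v : ZMod m) : Equiv.Perm (ZMod n × ZMod m) where
  toFun p := (p.1, p.2 + u + sg p.1 * v)
  invFun p := (p.1, p.2 - u - sg p.1 * v)
  left_inv p := by ext <;> simp <;> ring
  right_inv p := by ext <;> simp <;> ring

lemma trT_apply {n m : ℕ} (sg : ZMod n → ZMod m) (u v x : ZMod m) (i : ZMod n) :
    trT sg u v (i, x) = (i, x + u + sg i * v) := rfl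

lemma trT_mul {n m : ℕ} (sg : ZMod n → ZMod m) (u v u' v' : ZMod m) :
    trT sg u v * trT sg u' v' = trT sg (u + u') (v + v') := by
  ext ⟨i, x⟩ <;> simp [trT_apply] <;> ring

lemma trT_zero {n m : ℕ} (sg : ZMod n → ZMod m) : trT sg 0 0 = 1 := by
  ext ⟨i, x⟩ <;> simp [trT_apply]

lemma trT_pow {n m : ℕ} (sg : ZMod n → ZMod m) (u v : ZMod m) (k : ℕ) :
    trT sg u v ^ k = trT sg (k * u) (k * v) := by
  induction k with
  | zero => simp [trT_zero]
  | succ k ih => rw [pow_succ, ih, trT_mul]; push_cast; congr 1 <;> ring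

lemma trT_inv {n m : ℕ} (sg : ZMod n → ZMod m) (u v : ZMod m) :
    (trT sg u v)⁻¹ = trT sg (-u) (-v) := by
  rw [inv_eq_iff_mul_eq_one, trT_mul]; simp [trT_zero]

/-- The model reflection. -/
def refR {n m : ℕ} (sg : ZMod n → ZMod m) (h2 : ∀ i, sg (2 - i) = sg i)
    (hq : ∀ i, sg i * sg i = 1) : Equiv.Perm (ZMod n × ZMod m) where
  toFun p := (2 - p.1, sg p.1 * p.2)
  invFun p := (2 - p.1, sg p.1 * p.2)
  left_inv p := by ext <;> simp [h2, ← mul_assoc, hq]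
  right_inv p := by ext <;> simp [h2, ← mul_assoc, hq]

theorem core (m n q : ℕ) (h : ZMod m) (hh : 2 * h = 1) (hm : 3 ≤ m) (hnq : n = 2 * (2 * q + 1))
    (hn6 : 3 ≤ n)
    (sg : ZMod n → ZMod m) (s0 : sg 0 = 1) (s1 : ∀ i, sg (i + 1) = - sg i)
    (h2 : ∀ i, sg (2 - i) = sg i)
    (hq : ∀ i, sg i * sg i = 1) (A B : Equiv.Perm (ZMod n × ZMod m))
    (hA : ∀ i x, A (i, x) = (i + 1, sg i * x))
    (hB : ∀ i x, B (i, x) = (2 - i, 1 + sg i * x)) :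
    orderOf A = 2 * n ∧ orderOf B = 2 * m ∧ orderOf (A * B) = 2 ∧
      Nat.card (Subgroup.closure {A, B} : Subgroup (Equiv.Perm (ZMod n × ZMod m)))
        = 4 * m ^ 2 * n := by
  have : NeZero n := ⟨by omega⟩
  have : NeZero m := ⟨by omega⟩
  have : Fact (1 < m) := ⟨by omega⟩
  have : Fact (1 < n) := ⟨by omega⟩
  have h12 : (2 : ZMod m) ≠ 0 := by
    intro h0; rw [h0, zero_mul] at hh; exact zero_ne_one hh
  have hn2 : (2 : ZMod n) ≠ 0 := by
    intro h0
    have : ((2 : ℕ) : ZMod n) = 0 := by exact_mod_cast h0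
    rw [ZMod.natCast_eq_zero_iff] at this
    exact absurd (Nat.le_of_dvd (by norm_num) this) (by omega)
  have canc : ∀ a b : ZMod m, 2 * a = 2 * b → a = b := by
    intro a b hab; linear_combination h * hab + (b - a) * hh
  have s1' : sg 1 = -1 := by have := s1 0; rw [zero_add, s0] at this; exact this
  set R := refR sg h2 hq with hR
  have hRa : ∀ i x, R (i, x) = (2 - i, sg i * x) := fun i x => rfl
  have R2 : R * R = 1 := by
    ext ⟨i, x⟩ <;> simp [hRa, h2, ← mul_assoc, hq]
  have hBR : B = trT sg 1 0 * R := by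
    ext ⟨i, x⟩ <;> simp [hRa, hB, trT_apply]; ring
  have AT : ∀ u v, A * trT sg u v = trT sg v (-u) * A := by
    intro u v
    ext ⟨i, x⟩
    · simp [hA, trT_apply]
    · simp only [Equiv.Perm.mul_apply, trT_apply, hA, s1]; linear_combination v * hq i
  have RT : ∀ u v, R * trT sg u v = trT sg v u * R := by
    intro u v
    ext ⟨i, x⟩
    · simp [hRa, trT_apply]
    · simp only [Equiv.Perm.mul_apply, trT_apply, hRa, h2]; linear_combination v * hq i
  have ARA : A * R * A = R := by
    ext ⟨i, x⟩
    · simp [hA, hRa]; ring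
    · have : sg (2 - (i + 1)) = - sg i := by rw [h2, s1]
      simp only [Equiv.Perm.mul_apply, hA, hRa, s1, this]; linear_combination sg i * x * hq i
  have RA : R * A = A⁻¹ * R := by rw [eq_inv_mul_iff_mul_eq, ← mul_assoc, ARA]
  have RAk : ∀ k : ℤ, R * A ^ k = A ^ (-k) * R := by
    intro k
    have : SemiconjBy R A A⁻¹ := RA
    have := this.zpow_right k
    rw [inv_zpow, ← zpow_neg] at this
    exact this
  have AiT : ∀ u v, A⁻¹ * trT sg u v = trT sg (-v) u * A⁻¹ := by
    intro u v
    rw [inv_mul_eq_iff_eq_mul, ← mul_assoc, AT, mul_assoc, mul_inv_cancel, mul_one, neg_neg]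
  -- powers of A
  have Ak1 : ∀ (k : ℕ) (p), ((A ^ k) p).1 = p.1 + k := by
    intro k
    induction k with
    | zero => simp
    | succ k ih => 
      rintro ⟨i, x⟩
      rw [pow_succ, Equiv.Perm.mul_apply, ih, hA]; push_cast; ring
  have A2 : ∀ (k : ℕ) i x, (A ^ (2 * k)) (i, x) = (i + 2 * k, (-1) ^ k * x) := by
    intro k
    induction k with
    | zero => simp
    | succ k ih =>
      intro i x
      rw [mul_add, pow_add, Equiv.Perm.mul_apply, mul_one, pow_two, Equiv.Perm.mul_apply, hA, hA, ih,
        s1]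
      ext
      · push_cast; ring
      · simp only; linear_combination (-1) * (-1) ^ k * x * hq i
  have An : ∀ i x, (A ^ n) (i, x) = (i, -x) := by
    intro i x
    have e0 : A ^ n = A ^ (2 * (2 * q + 1)) := congrArg (fun k => A ^ k) hnq
    rw [e0, A2]
    have e1 : (2 : ZMod n) * ((2 * q + 1 : ℕ) : ZMod n) = 0 := by
      have e2 : ((2 * (2 * q + 1) : ℕ) : ZMod n) = 0 := by
        rw [ZMod.natCast_eq_zero_iff]; exact hnq ▸ dvd_rfl
      push_cast at e2 ⊢; exact e2
    rw [e1, add_zero]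
    simp [pow_succ, pow_mul]
  have A2n : A ^ (2 * n) = 1 := by
    rw [two_mul, pow_add]
    ext ⟨i, x⟩ <;> simp [An]
  have Ane : ∀ u v, trT sg u v * A ^ n ≠ 1 := by
    intro u v hc
    have e0 := congrArg Prod.snd (Equiv.congr_fun hc (0, 0))
    have e1 := congrArg Prod.snd (Equiv.congr_fun hc (0, 1))
    simp only [Equiv.Perm.mul_apply, An, trT_apply, Equiv.Perm.one_apply] at e0 e1
    apply h12
    linear_combination e0 - e1
  have Akn : ∀ k : ℕ, ∀ u v, trT sg u v * A ^ k = 1 → 2 * n ∣ k ∧ u = 0 ∧ v = 0 := by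
    intro k u v hk
    have e0 := congrArg Prod.fst (Equiv.congr_fun hk (0, 0))
    have e1 := Ak1 k (0, 0)
    have e2 : (trT sg u v * A ^ k) (0, 0) = trT sg u v ((A ^ k) (0,0)) := rfl
    have e3 : ∀ p, (trT sg u v p).1 = p.1 := fun p => rfl
    rw [e2, e3, e1] at e0
    simp only [Equiv.Perm.one_apply, zero_add] at e0
    rw [ZMod.natCast_eq_zero_iff] at e0
    obtain ⟨l, rfl⟩ := e0
    rcases Nat.even_or_odd' l with ⟨c, rfl | rfl⟩
    · rw [show n * (2 * c) = 2 * n * c by ring] at hk ⊢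
      rw [pow_mul, A2n, one_pow, mul_one] at hk
      have e4 := congrArg Prod.snd (Equiv.congr_fun hk (0, 0))
      have e5 := congrArg Prod.snd (Equiv.congr_fun hk (1, 0))
      simp only [trT_apply, Equiv.Perm.one_apply, s0, s1'] at e4 e5
      refine ⟨dvd_mul_right _ _, canc _ _ ?_, canc _ _ ?_⟩
      · linear_combination e4 + e5
      · linear_combination e4 - e5
    · exfalso
      rw [show n * (2 * c + 1) = 2 * n * c + n by ring, pow_add, pow_mul, A2n, one_pow,
        one_mul] at hk
      exact Ane _ _ hk
  have B2 : B ^ 2 = trT sg 1 1 := by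
    rw [pow_two, hBR, mul_assoc, ← mul_assoc R, RT, mul_assoc, R2, mul_one, trT_mul]; simp
  have R1 : ∀ i, (R (i, 0)).1 = 2 - i := fun i => rfl
  refine ⟨?_, ?_, ?_, ?_⟩
  · apply Nat.dvd_antisymm (orderOf_dvd_of_pow_eq_one A2n)
    refine (Akn (orderOf A) 0 0 ?_).1
    rw [trT_zero, one_mul, pow_orderOf_eq_one]
  · have hT : ∀ k : ℕ, trT sg (k * 1) (k * 1) = 1 → m ∣ k := by
      intro k hk
      have := (Akn 0 _ _ (by rw [pow_zero, mul_one]; exact hk)).2.1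
      rw [mul_one, ZMod.natCast_eq_zero_iff] at this
      exact this
    apply Nat.dvd_antisymm
    · apply orderOf_dvd_of_pow_eq_one
      rw [pow_mul, B2, trT_pow]; simp [trT_zero]
    · have hp := pow_orderOf_eq_one B
      rcases Nat.even_or_odd' (orderOf B) with ⟨c, hc | hc⟩
      · rw [hc, pow_mul, B2, trT_pow] at hp
        rw [hc]; exact Nat.mul_dvd_mul_left 2 (hT c hp)
      · exfalso
        rw [hc, pow_succ, pow_mul, B2, trT_pow] at hp
        have := congrArg Prod.fst (Equiv.congr_fun hp (0, 0))
        simp [trT_apply, hB] at this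
        exact hn2 this
  · apply orderOf_eq_prime
    · ext ⟨i, x⟩
      · simp [pow_two, hA, hB]; ring
      · have e : sg (2 - i + 1) = - sg i := by rw [s1, h2]
        simp only [pow_two, Equiv.Perm.mul_apply, hA, hB, h2, e, Equiv.Perm.one_apply]
        linear_combination (x * (sg i * sg i + 1) + sg i) * hq i
    · intro hc
      have := congrArg Prod.fst (Equiv.congr_fun hc (1, 0))
      simp [hA, hB] at this
      apply hn2
      linear_combination 2 * this
  · let F : (ZMod m × ZMod m) × Fin (2 * n) × Fin 2 → Equiv.Perm (ZMod n × ZMod m) :=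
      fun t => trT sg t.1.1 t.1.2 * A ^ (t.2.1 : ℕ) * R ^ (t.2.2 : ℕ)
    have Fst : ∀ u v (k : ℕ) p, ((trT sg u v * A ^ k) p).1 = p.1 + k := fun u v k p => Ak1 k p
    have key : ∀ u v u' v' (k k' : ℕ), k ≤ k' → k' < 2 * n →
        trT sg u v * A ^ k = trT sg u' v' * A ^ k' → u = u' ∧ v = v' ∧ k = k' := by
      intro u v u' v' k k' hkk hk' he
      obtain ⟨d, rfl⟩ := Nat.exists_eq_add_of_le hkk
      rw [add_comm k d, pow_add, ← mul_assoc, mul_left_inj] at he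
      have : trT sg (-u + u') (-v + v') * A ^ d = 1 := by
        rw [← trT_mul, ← trT_inv, mul_assoc, ← he, inv_mul_cancel]
      obtain ⟨hd, hu, hv⟩ := Akn _ _ _ this
      have := Nat.eq_zero_of_dvd_of_lt hd (by omega)
      exact ⟨by linear_combination -hu, by linear_combination -hv, by omega⟩
    have key' : ∀ u v u' v' (k k' : ℕ), k < 2 * n → k' < 2 * n →
        trT sg u v * A ^ k = trT sg u' v' * A ^ k' → u = u' ∧ v = v' ∧ k = k' := by
      intro u v u' v' k k' hk hk' he
      rcases le_total k k' with hl | hl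
      · exact key _ _ _ _ _ _ hl hk' he
      · obtain ⟨a, b, c⟩ := key _ _ _ _ _ _ hl hk he.symm
        exact ⟨a.symm, b.symm, c.symm⟩
    have noR : ∀ u v u' v' (k k' : ℕ), trT sg u v * A ^ k ≠ trT sg u' v' * A ^ k' * R := by
      intro u v u' v' k k' he
      have e0 := congrArg Prod.fst (Equiv.congr_fun he (0, 0))
      have e1 := congrArg Prod.fst (Equiv.congr_fun he (1, 0))
      rw [Equiv.Perm.mul_apply _ R, Fst, Fst, R1] at e0 e1
      simp only at e0 e1
      apply hn2
      linear_combination e1 - e0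
    have Finj : Function.Injective F := by
      rintro ⟨⟨u, v⟩, ⟨k, hk⟩, e⟩ ⟨⟨u', v'⟩, ⟨k', hk'⟩, e'⟩ he
      have fin : ∀ {e : Fin 2}, trT sg u v * A ^ k = trT sg u' v' * A ^ k' →
        (((u, v), ⟨k, hk⟩, e) : (ZMod m × ZMod m) × Fin (2 * n) × Fin 2)
          = ((u', v'), ⟨k', hk'⟩, e) := by
        intro e he
        obtain ⟨a, b, c⟩ := key' _ _ _ _ _ _ hk hk' he
        subst a b c; rfl
      fin_cases e <;> fin_cases e' <;> simp only [F] at he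
      · simp at he; exact fin he
      · simp at he; exact absurd he (noR _ _ _ _ _ _)
      · simp at he; exact absurd he.symm (noR _ _ _ _ _ _)
      · simp at he; exact fin he
    have mA : A ∈ Subgroup.closure {A, B} := Subgroup.subset_closure (by simp)
    have mB : B ∈ Subgroup.closure {A, B} := Subgroup.subset_closure (by simp)
    have mT : ∀ u v, trT sg u v ∈ Subgroup.closure {A, B} := by
      intro u v
      have t1 : trT sg 1 1 ∈ Subgroup.closure {A, B} := by rw [← B2]; exact pow_mem mB 2
      have t2 : trT sg 1 (-1) ∈ Subgroup.closure {A, B} := by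
        have : trT sg 1 (-1) = A * trT sg 1 1 * A⁻¹ := by rw [AT]; group
        rw [this]; exact mul_mem (mul_mem mA t1) (inv_mem mA)
      have := mul_mem (pow_mem t1 ((u + v) * h).val) (pow_mem t2 ((u - v) * h).val)
      rw [trT_pow, trT_pow, trT_mul, ZMod.natCast_zmod_val, ZMod.natCast_zmod_val] at this
      convert this using 2
      · linear_combination -u * hh
      · linear_combination -v * hh
    have mR : R ∈ Subgroup.closure {A, B} := by
      have : R = (trT sg 1 0)⁻¹ * B := by rw [hBR]; group
      rw [this]; exact mul_mem (inv_mem (mT _ _)) mB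
    have norm : ∀ g ∈ Subgroup.closure {A, B}, ∃ u v, ∃ k e : ℤ, g = trT sg u v * A ^ k * R ^ e := by
      intro g hg
      induction hg using Subgroup.closure_induction_left with
      | one => exact ⟨0, 0, 0, 0, by simp [trT_zero]⟩
      | mul_left x hx y hy ih =>
        obtain ⟨u, v, k, e, rfl⟩ := ih
        rcases hx with rfl | rfl
        · refine ⟨v, -u, 1 + k, e, ?_⟩
          rw [← mul_assoc, ← mul_assoc, AT, zpow_one_add]; group
        · refine ⟨1 + v, 0 + u, -k, 1 + e, ?_⟩
          rw [← trT_mul, zpow_one_add, hBR]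
          simp only [mul_assoc]
          rw [← mul_assoc R, RT, mul_assoc (trT sg v u), ← mul_assoc R, RAk, mul_assoc]
      | inv_mul_cancel x hx y hy ih =>
        obtain ⟨u, v, k, e, rfl⟩ := ih
        rcases hx with rfl | hx
        · refine ⟨-v, u, -1 + k, e, ?_⟩
          rw [← mul_assoc, ← mul_assoc, AiT, zpow_add, zpow_neg_one]; group
        · refine ⟨0 + v, -1 + u, -k, 1 + e, ?_⟩
          have hBi : B⁻¹ = trT sg 0 (-1) * R := by
            rw [inv_eq_iff_mul_eq_one, hBR, mul_assoc, ← mul_assoc R, RT, mul_assoc, R2, mul_one,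
              trT_mul]; simp [trT_zero]
          rw [← trT_mul, zpow_one_add, show x = B from hx, hBi]
          simp only [mul_assoc]
          rw [← mul_assoc R, RT, mul_assoc (trT sg v u), ← mul_assoc R, RAk, mul_assoc]
    have hrange : ((Subgroup.closure {A, B} : Subgroup _) : Set (Equiv.Perm (ZMod n × ZMod m)))
        = Set.range F := by
      ext g
      constructor
      · intro hg
        obtain ⟨u, v, k, e, rfl⟩ := norm g hg
        have a1 := Int.emod_nonneg k (b := ((2 * n : ℕ) : ℤ)) (by omega)
        have a2 := Int.emod_lt_of_pos k (b := ((2 * n : ℕ) : ℤ)) (by omega)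
        refine ⟨((u, v), ⟨(k % ((2 * n : ℕ) : ℤ)).toNat, by omega⟩, ⟨(e % 2).toNat, by omega⟩), ?_⟩
        simp only [F]
        congr 1
        · congr 1
          rw [← zpow_natCast, Int.toNat_of_nonneg a1]
          exact (zpow_eq_zpow_emod' k A2n).symm
        · rw [← zpow_natCast, Int.toNat_of_nonneg (by omega)]
          exact (zpow_eq_zpow_emod' (n := 2) e (by rw [pow_two, R2])).symm
      · rintro ⟨t, rfl⟩
        exact mul_mem (mul_mem (mT _ _) (pow_mem mA _)) (pow_mem mR _)
    change Nat.card ((Subgroup.closure {A, B} : Subgroup _) : Set (Equiv.Perm (ZMod n × ZMod m))) = _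
    rw [hrange, Nat.card_range_of_injective Finj]
    simp [Nat.card_prod]
    ring

theorem statement14
    (m s n : ℕ) (hm : 3 ≤ m) (hmo : Odd m) (hs : 0 < s) (hs4 : s % 4 = 2) (hn : n = s * m)
    (σ₁ σ₂ : Equiv.Perm (ZMod n × ZMod m))
    (hσ₁ : ∀ (i : ZMod n) (j : ZMod m),
      σ₁ (i, j) = if i = 0 then (i + 1, 1 - j) else (i + 1, j))
    (hσ₂ : ∀ (i : ZMod n) (j : ZMod m),
      σ₂ (i, j) = if i = 1 then (2 - i, 2 - j)
        else if zrep i % 4 = 0 ∨ zrep i % 4 = 3 then (2 - i, j + 1) else (2 - i, j - 1))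
    :
    orderOf σ₁ = 2 * n ∧ orderOf σ₂ = 2 * m ∧ orderOf (σ₁ * σ₂) = 2 ∧
      Nat.card (Subgroup.closure {σ₁, σ₂} : Subgroup (Equiv.Perm (ZMod n × ZMod m))) = 4 * m ^ 2 * n := by
  have hn4 : n % 4 = 2 := by
    obtain ⟨k, rfl⟩ := hmo
    rw [hn, Nat.mul_mod, hs4]
    have : (2 * k + 1) % 4 = 1 ∨ (2 * k + 1) % 4 = 3 := by omega
    rcases this with h | h <;> rw [h]
  have hn6 : 3 ≤ n := by
    have : 1 * 3 ≤ s * m := Nat.mul_le_mul hs hm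
    omega
  have hn0 : 0 < n := by omega
  obtain ⟨h, hh⟩ : ∃ h : ZMod m, 2 * h = 1 := by
    obtain ⟨k, hk⟩ := hmo
    refine ⟨((k + 1 : ℕ) : ZMod m), ?_⟩
    have : ((2 * k + 1 : ℕ) : ZMod m) = 0 := by rw [← hk]; exact ZMod.natCast_self m
    push_cast at this ⊢
    linear_combination this
  let c := ZMod.castHom (show 2 ∣ n by omega) (ZMod 2)
  let f : ZMod 2 → ZMod m := fun t => if t = 0 then 1 else -1
  have f1 : ∀ t, f (t + 1) = - f t := by
    intro t
    have : t = 0 ∨ t = 1 := by revert t; decide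
    rcases this with rfl | rfl
    · simp [f]
    · have : (1 + 1 : ZMod 2) = 0 := by decide
      simp [f, this]
  have f2 : ∀ t, f (2 - t) = f t := by
    intro t; congr 1; revert t; decide
  have f3 : ∀ t, f t * f t = 1 := by
    intro t; simp only [f]; split_ifs <;> ring
  let sg : ZMod n → ZMod m := fun i => f (c i)
  have sgz : ∀ i, sg i = if zrep i % 2 = 0 then 1 else -1 := by
    intro i
    have h3 := (zrep_bounds hn0 i).2.2
    have : c i = ((zrep i : ℕ) : ZMod 2) := by
      conv_lhs => rw [← h3]
      simp
    simp only [sg, f, this, ZMod.natCast_eq_zero_iff, Nat.dvd_iff_mod_eq_zero]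
  let φ : ZMod n → ZMod m := fun i => if zrep i % 4 = 0 ∨ zrep i % 4 = 1 then 1 else -1
  have φ2 : ∀ i, φ i * φ i = 1 := by
    intro i; simp only [φ]; split_ifs <;> ring
  let Φ : Equiv.Perm (ZMod n × ZMod m) :=
    { toFun := fun p => (p.1, φ p.1 * (p.2 - h))
      invFun := fun p => (p.1, φ p.1 * p.2 + h)
      left_inv := fun p => by ext <;> simp [← mul_assoc, φ2]
      right_inv := fun p => by ext <;> simp [← mul_assoc, φ2] }
  have hΦ : ∀ i x, Φ (i, x) = (i, φ i * (x - h)) := fun _ _ => rfl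
  have hΦi : ∀ i x, Φ⁻¹ (i, x) = (i, φ i * x + h) := fun _ _ => rfl
  have z0 : zrep (0 : ZMod n) = n := by simp [zrep]
  have z1 : zrep (1 : ZMod n) = 1 := zrep_eq hn0 _ 1 le_rfl (by omega) (by simp)
  have hA : ∀ i x, (MulAut.conj Φ σ₁) (i, x) = (i + 1, sg i * x) := by
    intro i x
    rw [MulAut.conj_apply, Equiv.Perm.mul_apply, Equiv.Perm.mul_apply, hΦi, hσ₁, sgz]
    by_cases hi : i = 0
    · subst hi
      simp only [if_true, hΦ, φ, zero_add, z0, z1, hn4]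
      have : n % 2 = 0 := by omega
      ext <;> simp [this]
      linear_combination -hh
    · have hz := zrep_succ hn0 i hi
      rw [if_neg hi, hΦ]
      simp only [φ, hz]
      have : zrep i % 4 < 4 := Nat.mod_lt _ (by norm_num)
      have e1 : (zrep i + 1) % 4 = (zrep i % 4 + 1) % 4 := by omega
      have e2 : zrep i % 2 = (zrep i % 4) % 2 := by omega
      rw [e1, e2]
      generalize zrep i % 4 = r at *
      ext
      · rfl
      · interval_cases r <;> simp
  have hB : ∀ i x, (MulAut.conj Φ σ₂) (i, x) = (2 - i, 1 + sg i * x) := by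
    intro i x
    rw [MulAut.conj_apply, Equiv.Perm.mul_apply, Equiv.Perm.mul_apply, hΦi, hσ₂, sgz]
    by_cases hi : i = 1
    · subst hi
      have : (2 : ZMod n) - 1 = 1 := by ring
      simp only [if_true, hΦ, φ, this, z1]
      ext <;> simp
      linear_combination -hh
    · obtain ⟨hz, hz2⟩ := zrep_refl hn0 i hi
      have hz3 := (zrep_bounds hn0 i).2.1
      rw [if_neg hi]
      have : zrep i % 4 < 4 := Nat.mod_lt _ (by norm_num)
      have e1 : (zrep (2 - i)) % 4 = (4 - zrep i % 4) % 4 := by omega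
      have e2 : zrep i % 2 = (zrep i % 4) % 2 := by omega
      rw [apply_ite Φ, hΦ, hΦ]
      simp only [φ]
      rw [e1, e2]
      generalize zrep i % 4 = r at *
      ext
      · split_ifs <;> rfl
      · interval_cases r <;> simp <;> ring
  have hc := core m n (n / 4) h hh hm (by omega) hn6 sg (by simp [sg, f])
    (by intro i; simp only [sg, map_add, map_one, f1])
    (by intro i; simp only [sg, map_sub, map_ofNat, f2])
    (fun i => f3 _) (MulAut.conj Φ σ₁) (MulAut.conj Φ σ₂) hA hB
  rw [← map_mul, MulEquiv.orderOf_eq, MulEquiv.orderOf_eq, MulEquiv.orderOf_eq] at hc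
  refine ⟨hc.1, hc.2.1, hc.2.2.1, ?_⟩
  rw [← hc.2.2.2]
  have : (Subgroup.closure {MulAut.conj Φ σ₁, MulAut.conj Φ σ₂} : Subgroup _)
      = (Subgroup.closure {σ₁, σ₂}).map (MulAut.conj Φ).toMonoidHom := by
    rw [MonoidHom.map_closure, Set.image_pair]; rfl
  rw [this]
  exact (Subgroup.card_map_of_injective (MulAut.conj Φ).injective).symm
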